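/- Let B and F be topological spaces and let the bundle space X = B × F carry the product topology, with projection π = Prod.fst : B × F → B. Let X_free ⊆ B × F be an open set (the free state space). Let D ⊆ B be a set of base samples that meets every nonempty open subset of B that is contained in the image π(X_free) is not required; instead assume D meets every nonempty open subset of B of the form π(U) for U a nonempty open subset of X_free (equivalently, D is dense in the open set π(X_free)). For each b ∈ D let E(b) ⊆ F be a dense subset of F (the fiber samples over b). Then the lifted sample set A = {(b, f) : b ∈ D, f ∈ E(b)} is dense in X_free in the set-theoretic sense: for every nonempty open set U ⊆ X_free, the intersection A ∩ U is nonempty. -/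

import Mathlib

/-- Theorem 1 of the paper (restriction sampling with visibility regions is dense in the
free state space), for product-space fiber bundles `X = B × F` with projection
`π = Prod.fst` and `Lift (b, f) = (b, f)`.

`Xfree` is the open free state space, `D` is the set of base samples, assumed to meet
every nonempty open set of the form `π(U)` for `U` a nonempty open subset of `Xfree`
(i.e. `D` is dense in the open set `π(Xfree)`), and `E b` is a dense set of fiber
samples over each `b ∈ D`.  Then the lifted sample set
`A = {(b, f) : b ∈ D, f ∈ E b}` meets every nonempty open subset of `Xfree`. -/
theorem sparse_multilevel_restriction_sampling_dense
    {B F : Type*} [TopologicalSpace B] [TopologicalSpace F]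
    (Xfree : Set (B × F)) (hXfree : IsOpen Xfree)
    (D : Set B)
    (hD : ∀ U : Set (B × F), IsOpen U → U.Nonempty → U ⊆ Xfree →
      (D ∩ (Prod.fst '' U)).Nonempty)
    (E : B → Set F) (hE : ∀ b ∈ D, Dense (E b)) :
    ∀ U : Set (B × F), IsOpen U → U.Nonempty → U ⊆ Xfree →
      ({p : B × F | p.1 ∈ D ∧ p.2 ∈ E p.1} ∩ U).Nonempty := by
  intro U hUo hUne hUsub
  obtain ⟨b, hbD, ⟨⟨_, f₀⟩, hU, rfl⟩⟩ := hD U hUo hUne hUsub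
  -- The slice of `U` over the sampled base point is open and nonempty, so `E b` meets it.
  obtain ⟨f, hfU, hfE⟩ := (hE _ hbD).inter_open_nonempty _
    (hUo.preimage (Continuous.prodMk_right _)) ⟨f₀, hU⟩
  exact ⟨(_, f), ⟨hbD, hfE⟩, hfU⟩
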